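/- Let Ω be a left artinian ring and let s be the number of isomorphism classes of simple left Ω-modules. Then both K₀(Ω) and G₀(Ω) are free ℤ-modules of rank s. -/

import Mathlib

/-! ### Grothendieck groups `G₀` and `K₀` of a ring

`G0 S` is the Grothendieck group of the category of finitely generated (left) `S`-modules:
the free abelian group on (bundled) finitely generated `S`-modules modulo the relation
`[B] = [A] + [C]` for every short exact sequence `0 → A → B → C → 0`.

`K0 S` is the Grothendieck group of the category of finitely generated projective (left)
`S`-modules: the free abelian group on bundled finitely generated projective `S`-modules
modulo the relations `[B] = [A] + [C]` whenever `B ≅ A ⊕ C`. -/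

/-- A bundled finitely generated (left) module over the ring `S`. -/
structure FGMod (S : Type) [Ring S] : Type 1 where
  carrier : Type
  [isAddCommGroup : AddCommGroup carrier]
  [isModule : Module S carrier]
  [isFinite : Module.Finite S carrier]

attribute [instance] FGMod.isAddCommGroup FGMod.isModule FGMod.isFinite

/-- A bundled finitely generated projective (left) module over the ring `S`. -/
structure PMod (S : Type) [Ring S] : Type 1 where
  carrier : Type
  [isAddCommGroup : AddCommGroup carrier]
  [isModule : Module S carrier]
  [isFinite : Module.Finite S carrier]
  [isProjective : Module.Projective S carrier]

attribute [instance] PMod.isAddCommGroup PMod.isModule PMod.isFinite PMod.isProjective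

/-- The Grothendieck group of the category of finitely generated `S`-modules. -/
def G0 (S : Type) [Ring S] : Type 1 :=
  FreeAbelianGroup (FGMod S) ⧸ AddSubgroup.closure
    {x | ∃ (A B C : FGMod S) (f : A.carrier →ₗ[S] B.carrier) (g : B.carrier →ₗ[S] C.carrier),
      Function.Injective f ∧ Function.Surjective g ∧ Function.Exact f g ∧
      x = FreeAbelianGroup.of B - FreeAbelianGroup.of A - FreeAbelianGroup.of C}

noncomputable instance (S : Type) [Ring S] : AddCommGroup (G0 S) :=
  QuotientAddGroup.Quotient.addCommGroup _

/-- The class `[M]` of a finitely generated `S`-module `M` in `G0 S`. -/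
def G0.cls (S : Type) [Ring S] (M : Type) [AddCommGroup M] [Module S M]
    [Module.Finite S M] : G0 S :=
  QuotientAddGroup.mk (FreeAbelianGroup.of (FGMod.mk M))

/-- The Grothendieck group of the category of finitely generated projective `S`-modules. -/
def K0 (S : Type) [Ring S] : Type 1 :=
  FreeAbelianGroup (PMod S) ⧸ AddSubgroup.closure
    {x | ∃ A B C : PMod S, Nonempty (B.carrier ≃ₗ[S] A.carrier × C.carrier) ∧
      x = FreeAbelianGroup.of B - FreeAbelianGroup.of A - FreeAbelianGroup.of C}

noncomputable instance (S : Type) [Ring S] : AddCommGroup (K0 S) :=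
  QuotientAddGroup.Quotient.addCommGroup _

/-- The class `[P]` of a finitely generated projective `S`-module `P` in `K0 S`. -/
def K0.cls (S : Type) [Ring S] (P : Type) [AddCommGroup P] [Module S P]
    [Module.Finite S P] [Module.Projective S P] : K0 S :=
  QuotientAddGroup.mk (FreeAbelianGroup.of (PMod.mk P))

/-- `c : K0 S → G0 S` is the Cartan homomorphism iff it sends the `K₀`-class of every
finitely generated projective module to its `G₀`-class. (Such a homomorphism exists and is
unique, since `K0 S` is generated by the classes of finitely generated projective modules.) -/
def IsCartanMap (S : Type) [Ring S] (c : K0 S →+ G0 S) : Prop :=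
  ∀ (P : Type) [AddCommGroup P] [Module S P] [Module.Finite S P] [Module.Projective S P],
    c (K0.cls S P) = G0.cls S P

/-! ### Statement: for a left artinian ring `Ω`, both `K₀(Ω)` and `G₀(Ω)` are free
`ℤ`-modules of rank `s`, where `s` is the number of isomorphism classes of simple left
`Ω`-modules.  Being a free `ℤ`-module of rank `s` is expressed as the existence of an
additive isomorphism with `SimpleClasses Ω →₀ ℤ`, the free abelian group on the set of
isomorphism classes of simple left `Ω`-modules. -/

/-- A bundled simple left `Ω`-module. -/
structure SimpleMod (S : Type) [Ring S] : Type 1 where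
  carrier : Type
  [isAddCommGroup : AddCommGroup carrier]
  [isModule : Module S carrier]
  [isSimple : IsSimpleModule S carrier]

attribute [instance] SimpleMod.isAddCommGroup SimpleMod.isModule SimpleMod.isSimple

/-- The setoid identifying linearly isomorphic simple modules. -/
def SimpleMod.isoSetoid (S : Type) [Ring S] : Setoid (SimpleMod S) where
  r M N := Nonempty (M.carrier ≃ₗ[S] N.carrier)
  iseqv := ⟨fun _ => ⟨LinearEquiv.refl _ _⟩, fun ⟨e⟩ => ⟨e.symm⟩,
    fun ⟨e⟩ ⟨e'⟩ => ⟨e.trans e'⟩⟩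

/-- The type of isomorphism classes of simple left `S`-modules. -/
def SimpleClasses (S : Type) [Ring S] : Type 1 :=
  Quotient (SimpleMod.isoSetoid S)

/-!
The classes of the simple modules `S` span `G₀` by dévissage along a composition series. For a
projective cover `P` of `S`, the length of `Hom(P, M)` over `End(P)` is additive in `M`, equals `1`
for `M = S` and vanishes on every other simple module; these functionals show that the classes
`[S]` are independent. On the `K₀` side, splitting off projective covers of simple quotients one at
a time shows that the classes of the projective covers span, and they are independent because
`[P] ↦ [P / rad P]` is a homomorphism `K₀ → G₀` taking the cover of `S` to `[S]`.
-/

section EssentialEpi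

variable {R : Type*} [Ring R]
variable {P Q M S T : Type*} [AddCommGroup P] [Module R P] [AddCommGroup Q] [Module R Q]
  [AddCommGroup M] [Module R M] [AddCommGroup S] [Module R S] [AddCommGroup T] [Module R T]

/-- An essential (or superfluous) epimorphism: a surjection that is not surjective on any proper
submodule. The second field says that the kernel is superfluous. When the source is projective,
this is a projective cover of the target. -/
structure IsEssentialEpi (p : P →ₗ[R] M) : Prop where
  surjective : Function.Surjective p
  eq_top_of_sup_ker : ∀ N : Submodule R P, N ⊔ LinearMap.ker p = ⊤ → N = ⊤

namespace IsEssentialEpi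

theorem surjective_of_comp {p : P →ₗ[R] M} (hp : IsEssentialEpi p) {f : Q →ₗ[R] P}
    (hf : Function.Surjective (p ∘ₗ f)) : Function.Surjective f := by
  rw [← LinearMap.range_eq_top]
  refine hp.eq_top_of_sup_ker _ ?_
  rw [← Submodule.comap_map_eq, ← LinearMap.range_comp, LinearMap.range_eq_top.2 hf,
    Submodule.comap_top]

theorem projective_of_comp_eq [Module.Projective R P] [IsNoetherian R Q] {q : Q →ₗ[R] M}
    (hq : IsEssentialEpi q) {p : P →ₗ[R] M} {i : Q →ₗ[R] P} (hpi : p ∘ₗ i = q) :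
    Module.Projective R Q := by
  obtain ⟨h, hqh⟩ := Module.projective_lifting_property q p hq.surjective
  have surj : Function.Surjective (h ∘ₗ i) := hq.surjective_of_comp <| by
    rw [← LinearMap.comp_assoc, hqh, hpi]
    exact hq.surjective
  let e := LinearEquiv.ofBijective (h ∘ₗ i)
    (IsNoetherian.bijective_of_surjective_endomorphism _ surj)
  exact .of_split i (e.symm.toLinearMap ∘ₗ h) (LinearMap.ext e.symm_apply_apply)

theorem jacobson_eq_ker [IsSimpleModule R S] {p : P →ₗ[R] S} (hp : IsEssentialEpi p) :
    Module.jacobson R P = LinearMap.ker p := by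
  refine le_antisymm (sInf_le (LinearMap.isCoatom_ker_of_surjective hp.surjective))
    (le_sInf fun m hm ↦ ?_)
  by_contra hle
  exact hm.1 (hp.eq_top_of_sup_ker m (hm.2 _ (left_lt_sup.2 hle)))

theorem nonempty_equiv_of_ne_zero [IsSimpleModule R S] [IsSimpleModule R T] {p : P →ₗ[R] S}
    (hp : IsEssentialEpi p) {g : P →ₗ[R] T} (hg : g ≠ 0) : Nonempty (S ≃ₗ[R] T) := by
  have hgs := LinearMap.surjective_of_ne_zero hg
  have hcoatom := LinearMap.isCoatom_ker_of_surjective hgs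
  have hle : LinearMap.ker p ≤ LinearMap.ker g := hp.jacobson_eq_ker ▸ sInf_le hcoatom
  have hker : LinearMap.ker p = LinearMap.ker g :=
    ((LinearMap.isCoatom_ker_of_surjective hp.surjective).le_iff_eq hcoatom.1).1 hle |>.symm
  exact ⟨(p.quotKerEquivOfSurjective hp.surjective).symm ≪≫ₗ
    Submodule.quotEquivOfEq _ _ hker ≪≫ₗ g.quotKerEquivOfSurjective hgs⟩

end IsEssentialEpi

theorem exists_submodule_isEssentialEpi [IsArtinian R P] [IsSimpleModule R S] {p : P →ₗ[R] S}
    (hp : p ≠ 0) : ∃ N : Submodule R P, IsEssentialEpi (p ∘ₗ N.subtype) := by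
  obtain ⟨N, hN⟩ := exists_minimal_of_wellFoundedLT (fun N ↦ ¬ N ≤ LinearMap.ker p)
    ⟨⊤, by rwa [top_le_iff, LinearMap.ker_eq_top]⟩
  have hker : LinearMap.ker (p ∘ₗ N.subtype) ≠ ⊤ := by
    rw [LinearMap.ker_comp, Ne, Submodule.comap_subtype_eq_top]
    exact hN.prop
  refine ⟨N, LinearMap.surjective_of_ne_zero fun h ↦ hker (LinearMap.ker_eq_top.2 h),
    fun K hK ↦ ?_⟩
  by_contra hne
  have hlt : K.map N.subtype < N := by
    simpa using Submodule.map_strictMono_of_injective N.injective_subtype (lt_top_iff_ne_top.2 hne)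
  have hle : K ≤ LinearMap.ker (p ∘ₗ N.subtype) := by
    rw [LinearMap.ker_comp, ← Submodule.map_le_iff_le_comap]
    exact not_not.1 (hN.not_prop_of_lt hlt)
  exact hker (by rwa [sup_eq_right.2 hle] at hK)

theorem exists_projectiveCover_of_isSimpleModule (R S : Type*) [Ring R] [IsArtinianRing R]
    [AddCommGroup S] [Module R S] [IsSimpleModule R S] :
    ∃ (I : Ideal R) (p : I →ₗ[R] S), Module.Projective R I ∧ IsEssentialEpi p := by
  have := IsSimpleModule.nontrivial R S
  obtain ⟨s, hs⟩ := exists_ne (0 : S)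
  have hp : LinearMap.toSpanSingleton R S s ≠ 0 := by
    rwa [Ne, LinearMap.toSpanSingleton_eq_zero_iff]
  obtain ⟨I, hI⟩ := exists_submodule_isEssentialEpi hp
  exact ⟨I, _, hI.projective_of_comp_eq rfl, hI⟩

end EssentialEpi

section Splitting

variable {R P Q : Type*} [Ring R] [AddCommGroup P] [Module R P] [AddCommGroup Q] [Module R Q]

theorem nonempty_equiv_ker_prod_of_surjective [Module.Projective R Q] {f : P →ₗ[R] Q}
    (hf : Function.Surjective f) : Nonempty (P ≃ₗ[R] LinearMap.ker f × Q) := by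
  obtain ⟨g, hg⟩ := f.exists_rightInverse_of_surjective (LinearMap.range_eq_top.2 hf)
  exact ⟨(f.exact_subtype_ker_map.splitSurjectiveEquiv (Submodule.injective_subtype _)
    ⟨g, hg⟩).1⟩

theorem projective_ker_of_surjective [Module.Projective R P] [Module.Projective R Q]
    {f : P →ₗ[R] Q} (hf : Function.Surjective f) : Module.Projective R (LinearMap.ker f) := by
  obtain ⟨e⟩ := nonempty_equiv_ker_prod_of_surjective hf
  have : Module.Projective R (LinearMap.ker f × Q) := .of_equiv e
  exact .of_split (LinearMap.inl R _ Q) (LinearMap.fst R _ Q) (LinearMap.fst_comp_inl R _ Q)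

end Splitting

section Top

variable {R A B C : Type*} [Ring R] [AddCommGroup A] [Module R A] [AddCommGroup B] [Module R B]
  [AddCommGroup C] [Module R C]

theorem jacobson_prod :
    Module.jacobson R (A × C) = (Module.jacobson R A).prod (Module.jacobson R C) := by
  refine le_antisymm ?_ ((Submodule.prod_le_iff R A C).2 ⟨?_, ?_⟩)
  · exact (Submodule.le_prod_iff R A C).2 ⟨Module.map_jacobson_le _, Module.map_jacobson_le _⟩
  · exact Module.map_jacobson_le _
  · exact Module.map_jacobson_le _

theorem nonempty_quotient_jacobson_equiv_prod (e : B ≃ₗ[R] A × C) :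
    Nonempty ((B ⧸ Module.jacobson R B) ≃ₗ[R]
      (A ⧸ Module.jacobson R A) × (C ⧸ Module.jacobson R C)) := by
  let q := (Module.jacobson R A).mkQ.prodMap (Module.jacobson R C).mkQ ∘ₗ e.toLinearMap
  have hq : Function.Surjective q :=
    ((Submodule.mkQ_surjective _).prodMap (Submodule.mkQ_surjective _)).comp e.surjective
  have hker : LinearMap.ker q = Module.jacobson R B := by
    rw [LinearMap.ker_comp, LinearMap.ker_prodMap, Submodule.ker_mkQ, Submodule.ker_mkQ,
      ← jacobson_prod, Module.comap_jacobson_of_bijective e.bijective]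
  exact ⟨Submodule.quotEquivOfEq _ _ hker.symm ≪≫ₗ q.quotKerEquivOfSurjective hq⟩

end Top

section HomLength

variable {R : Type*} [Ring R]
variable (P : Type*) [AddCommGroup P] [Module R P]
variable {A B C : Type*} [AddCommGroup A] [Module R A] [AddCommGroup B] [Module R B]
  [AddCommGroup C] [Module R C]

theorem exact_linearMap_comp_left {f : A →ₗ[R] B} {g : B →ₗ[R] C} (hf : Function.Injective f)
    (h : Function.Exact f g) :
    Function.Exact (fun a : P →ₗ[R] A ↦ f ∘ₗ a) (fun b : P →ₗ[R] B ↦ g ∘ₗ b) := by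
  intro b
  constructor
  · intro hb
    have hrange : ∀ x, b x ∈ LinearMap.range f := fun x ↦ (h (b x)).1 (LinearMap.congr_fun hb x)
    refine ⟨(LinearEquiv.ofInjective f hf).symm.toLinearMap ∘ₗ b.codRestrict _ hrange, ?_⟩
    exact LinearMap.ext fun x ↦ LinearEquiv.ofInjective_symm_apply f (h := hf) ⟨b x, hrange x⟩
  · rintro ⟨a, rfl⟩
    exact LinearMap.ext fun x ↦ h.apply_apply_eq_zero (a x)

/-- The map `Hom(P, A) → Hom(P, B)` induced by `f : A → B`, linear for the precomposition action of
`End(P)`, which is a right action and hence an action of `(End P)ᵈᵐᵃ`. -/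
def postcompEnd (f : A →ₗ[R] B) : (P →ₗ[R] A) →ₗ[(Module.End R P)ᵈᵐᵃ] (P →ₗ[R] B) where
  toFun h := f ∘ₗ h
  map_add' _ _ := LinearMap.comp_add _ _ _
  map_smul' _ _ := rfl

variable (R) in
/-- The length of `Hom(P, M)` as a right module over `End(P)`. When `P` is a projective cover of a
simple module `S`, this is the multiplicity of `S` as a composition factor of `M`. -/
noncomputable def homLength (M : Type*) [AddCommGroup M] [Module R M] : ℕ∞ :=
  Module.length (Module.End R P)ᵈᵐᵃ (P →ₗ[R] M)

variable [Module.Projective R P]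

theorem homLength_eq_add_of_exact {f : A →ₗ[R] B} {g : B →ₗ[R] C} (hf : Function.Injective f)
    (hg : Function.Surjective g) (h : Function.Exact f g) :
    homLength R P B = homLength R P A + homLength R P C :=
  Module.length_eq_add_of_exact (postcompEnd P f) (postcompEnd P g)
    (fun _ _ hab ↦ (LinearMap.cancel_left hf).1 hab)
    (fun k ↦ Module.projective_lifting_property g k hg) (exact_linearMap_comp_left P hf h)

theorem isSimpleModule_linearMap_of_nontrivial (S : Type*) [AddCommGroup S] [Module R S]
    [IsSimpleModule R S] [Nontrivial (P →ₗ[R] S)] :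
    IsSimpleModule (Module.End R P)ᵈᵐᵃ (P →ₗ[R] S) := by
  rw [isSimpleModule_iff_toSpanSingleton_surjective]
  refine ⟨inferInstance, fun f hf g ↦ ?_⟩
  obtain ⟨h, hfh⟩ := Module.projective_lifting_property f g (LinearMap.surjective_of_ne_zero hf)
  exact ⟨DomMulAct.mk h, hfh⟩

theorem homLength_ne_top_of_isSimpleModule (S : Type*) [AddCommGroup S] [Module R S]
    [IsSimpleModule R S] : homLength R P S ≠ ⊤ := by
  rcases subsingleton_or_nontrivial (P →ₗ[R] S) with _ | _
  · simp [homLength]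
  · have := isSimpleModule_linearMap_of_nontrivial (R := R) P S
    simp [homLength]

theorem homLength_ne_top {M : Type*} [AddCommGroup M] [Module R M] (hM : IsFiniteLength R M) :
    homLength R P M ≠ ⊤ := by
  induction hM with
  | of_subsingleton => simp [homLength]
  | @of_simple_quotient M _ _ N _ _ ih =>
    rw [homLength_eq_add_of_exact P N.injective_subtype N.mkQ_surjective
      (LinearMap.exact_subtype_mkQ N)]
    exact WithTop.add_ne_top.2 ⟨ih, homLength_ne_top_of_isSimpleModule P _⟩

end HomLength

theorem eq_top_of_forall_mk_of_mem {α : Type*} {N : AddSubgroup (FreeAbelianGroup α)}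
    {H : Submodule ℤ (FreeAbelianGroup α ⧸ N)}
    (h : ∀ a, QuotientAddGroup.mk (FreeAbelianGroup.of a) ∈ H) : H = ⊤ := by
  rw [eq_top_iff]
  rintro x -
  obtain ⟨y, rfl⟩ := QuotientAddGroup.mk_surjective x
  induction y using FreeAbelianGroup.induction_on with
  | zero => exact H.zero_mem
  | of a => exact h a
  | neg a ih => exact H.neg_mem ih
  | add a b ha hb => exact H.add_mem ha hb

section GrothendieckGroups

variable {R : Type} [Ring R]

namespace G0

section

variable {A B C : Type} [AddCommGroup A] [Module R A] [Module.Finite R A]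
  [AddCommGroup B] [Module R B] [Module.Finite R B]
  [AddCommGroup C] [Module R C] [Module.Finite R C]

theorem cls_eq_add_of_exact {f : A →ₗ[R] B} {g : B →ₗ[R] C} (hf : Function.Injective f)
    (hg : Function.Surjective g) (h : Function.Exact f g) : cls R B = cls R A + cls R C := by
  rw [← sub_eq_zero, ← sub_sub]
  exact (QuotientAddGroup.eq_zero_iff _).2 <| AddSubgroup.subset_closure
    ⟨FGMod.mk A, FGMod.mk B, FGMod.mk C, f, g, hf, hg, h, rfl⟩

variable (R A C) in
theorem cls_prod : cls R (A × C) = cls R A + cls R C :=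
  cls_eq_add_of_exact LinearMap.inl_injective LinearMap.snd_surjective .inl_snd

variable (R A) in
theorem cls_of_subsingleton [Subsingleton A] : cls R A = 0 := by
  have h : cls R A = cls R A + cls R A :=
    cls_eq_add_of_exact (f := (0 : A →ₗ[R] A)) (g := (0 : A →ₗ[R] A))
      (Function.injective_of_subsingleton _) (Function.surjective_to_subsingleton _)
      fun x ↦ by simp [Subsingleton.elim x 0]
  simpa using h

theorem cls_congr (e : A ≃ₗ[R] B) : cls R A = cls R B := by
  have h : cls R B = cls R A + cls R PUnit :=
    cls_eq_add_of_exact (f := e.toLinearMap) (g := (0 : B →ₗ[R] PUnit)) e.injective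
      (Function.surjective_to_subsingleton _) fun x ↦ by simp
  rw [h, cls_of_subsingleton R PUnit, add_zero]

end

theorem eq_top_of_forall_cls_mem {H : Submodule ℤ (G0 R)}
    (h : ∀ M : FGMod R, cls R M.carrier ∈ H) : H = ⊤ :=
  eq_top_of_forall_mk_of_mem h

/-- For a projective module `P`, the homomorphism `[M] ↦ homLength R P M`. -/
noncomputable def homLengthHom [IsArtinianRing R] (P : Type*) [AddCommGroup P] [Module R P]
    [Module.Projective R P] : G0 R →+ ℤ :=
  QuotientAddGroup.lift _
    (FreeAbelianGroup.lift fun M : FGMod R ↦ ((homLength R P M.carrier).toNat : ℤ)) (by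
      rw [AddSubgroup.closure_le]
      rintro _ ⟨A, B, C, f, g, hf, hg, h, rfl⟩
      have ne_top (M : FGMod R) : homLength R P M.carrier ≠ ⊤ := homLength_ne_top P <|
        isFiniteLength_iff_isNoetherian_isArtinian.2 ⟨inferInstance, inferInstance⟩
      simp only [SetLike.mem_coe, AddMonoidHom.mem_ker, map_sub, FreeAbelianGroup.lift_apply_of]
      rw [homLength_eq_add_of_exact P hf hg h, ENat.toNat_add (ne_top A) (ne_top C)]
      push_cast
      ring)

theorem homLengthHom_cls [IsArtinianRing R] (P : Type*) [AddCommGroup P] [Module R P]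
    [Module.Projective R P] (M : Type) [AddCommGroup M] [Module R M] [Module.Finite R M] :
    homLengthHom P (cls R M) = (homLength R P M).toNat :=
  FreeAbelianGroup.lift_apply_of _ _

end G0

namespace K0

section

variable {A B C : Type} [AddCommGroup A] [Module R A] [Module.Finite R A] [Module.Projective R A]
  [AddCommGroup B] [Module R B] [Module.Finite R B] [Module.Projective R B]
  [AddCommGroup C] [Module R C] [Module.Finite R C] [Module.Projective R C]

theorem cls_eq_add_of_equiv_prod (e : B ≃ₗ[R] A × C) : cls R B = cls R A + cls R C := by
  rw [← sub_eq_zero, ← sub_sub]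
  exact (QuotientAddGroup.eq_zero_iff _).2 <| AddSubgroup.subset_closure
    ⟨PMod.mk A, PMod.mk B, PMod.mk C, ⟨e⟩, rfl⟩

variable (R A) in
theorem cls_of_subsingleton [Subsingleton A] : cls R A = 0 := by
  have h : cls R A = cls R A + cls R A := cls_eq_add_of_equiv_prod 0
  simpa using h

end

theorem eq_top_of_forall_cls_mem {H : Submodule ℤ (K0 R)}
    (h : ∀ P : PMod R, cls R P.carrier ∈ H) : H = ⊤ :=
  eq_top_of_forall_mk_of_mem h

variable (R) in
/-- The homomorphism `K₀(R) → G₀(R)` sending the class of `P` to that of its top `P / rad P`. -/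
noncomputable def topHom : K0 R →+ G0 R :=
  QuotientAddGroup.lift _
    (FreeAbelianGroup.lift fun P : PMod R ↦ G0.cls R (P.carrier ⧸ Module.jacobson R P.carrier))
    (by
      rw [AddSubgroup.closure_le]
      rintro _ ⟨A, B, C, ⟨e⟩, rfl⟩
      obtain ⟨e'⟩ := nonempty_quotient_jacobson_equiv_prod e
      simp only [SetLike.mem_coe, AddMonoidHom.mem_ker, map_sub, FreeAbelianGroup.lift_apply_of]
      rw [G0.cls_congr e', G0.cls_prod]
      abel)

theorem topHom_cls (P : Type) [AddCommGroup P] [Module R P] [Module.Finite R P]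
    [Module.Projective R P] : topHom R (cls R P) = G0.cls R (P ⧸ Module.jacobson R P) :=
  FreeAbelianGroup.lift_apply_of _ _

theorem topHom_cls_of_isEssentialEpi {P S : Type} [AddCommGroup P] [Module R P]
    [Module.Finite R P] [Module.Projective R P] [AddCommGroup S] [Module R S]
    [IsSimpleModule R S] {p : P →ₗ[R] S} (hp : IsEssentialEpi p) :
    topHom R (cls R P) = G0.cls R S := by
  rw [topHom_cls]
  exact G0.cls_congr (Submodule.quotEquivOfEq _ _ hp.jacobson_eq_ker ≪≫ₗ
    p.quotKerEquivOfSurjective hp.surjective)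

end K0

namespace SimpleClasses

/-- A chosen simple module in an isomorphism class. -/
noncomputable def rep (σ : SimpleClasses R) : SimpleMod R :=
  Quotient.out (s := SimpleMod.isoSetoid R) σ

theorem exists_nonempty_rep_equiv (S : Type) [AddCommGroup S] [Module R S] [IsSimpleModule R S] :
    ∃ σ : SimpleClasses R, Nonempty (σ.rep.carrier ≃ₗ[R] S) :=
  ⟨Quotient.mk (SimpleMod.isoSetoid R) (SimpleMod.mk S),
    Quotient.mk_out (s := SimpleMod.isoSetoid R) (SimpleMod.mk S)⟩

theorem eq_of_nonempty_rep_equiv {σ τ : SimpleClasses R}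
    (h : Nonempty (σ.rep.carrier ≃ₗ[R] τ.rep.carrier)) : σ = τ :=
  (Quotient.out_equiv_out (s := SimpleMod.isoSetoid R)).1 h

variable [IsArtinianRing R]

theorem exists_isEssentialEpi_rep (σ : SimpleClasses R) :
    ∃ (P : PMod R) (p : P.carrier →ₗ[R] σ.rep.carrier), IsEssentialEpi p := by
  obtain ⟨I, p, _, hp⟩ := exists_projectiveCover_of_isSimpleModule R σ.rep.carrier
  exact ⟨PMod.mk I, p, hp⟩

/-- The source of a chosen projective cover of the simple module `σ.rep`. -/
noncomputable def cover (σ : SimpleClasses R) : PMod R :=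
  σ.exists_isEssentialEpi_rep.choose

/-- The projection of the chosen projective cover onto the simple module `σ.rep`. -/
noncomputable def coverMap (σ : SimpleClasses R) : σ.cover.carrier →ₗ[R] σ.rep.carrier :=
  σ.exists_isEssentialEpi_rep.choose_spec.choose

theorem isEssentialEpi_coverMap (σ : SimpleClasses R) : IsEssentialEpi σ.coverMap :=
  σ.exists_isEssentialEpi_rep.choose_spec.choose_spec

theorem coverMap_ne_zero (σ : SimpleClasses R) : σ.coverMap ≠ 0 := by
  have := IsSimpleModule.nontrivial R σ.rep.carrier
  exact LinearMap.ne_zero_of_surjective σ.isEssentialEpi_coverMap.surjective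

theorem homLength_cover_rep_self (σ : SimpleClasses R) :
    homLength R σ.cover.carrier σ.rep.carrier = 1 := by
  have : Nontrivial (σ.cover.carrier →ₗ[R] σ.rep.carrier) := ⟨_, 0, σ.coverMap_ne_zero⟩
  have := isSimpleModule_linearMap_of_nontrivial (R := R) σ.cover.carrier σ.rep.carrier
  exact Module.length_eq_one _ _

theorem homLength_cover_rep_of_ne {σ τ : SimpleClasses R} (h : σ ≠ τ) :
    homLength R σ.cover.carrier τ.rep.carrier = 0 := by
  have (g : σ.cover.carrier →ₗ[R] τ.rep.carrier) : g = 0 := by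
    by_contra hg
    exact h (eq_of_nonempty_rep_equiv (σ.isEssentialEpi_coverMap.nonempty_equiv_of_ne_zero hg))
  have : Subsingleton (σ.cover.carrier →ₗ[R] τ.rep.carrier) := subsingleton_of_forall_eq 0 this
  exact Module.length_eq_zero

theorem exists_surjective_cover (P : Type) [AddCommGroup P] [Module R P] [Module.Finite R P]
    [Module.Projective R P] [Nontrivial P] :
    ∃ (σ : SimpleClasses R) (f : P →ₗ[R] σ.cover.carrier), Function.Surjective f := by
  obtain ⟨m, hm, -⟩ :=
    (eq_top_or_exists_le_coatom (⊥ : Submodule R P)).resolve_left bot_ne_top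
  have : IsSimpleModule R (P ⧸ m) := isSimpleModule_iff_isCoatom.2 hm
  obtain ⟨σ, ⟨e⟩⟩ := exists_nonempty_rep_equiv (R := R) (P ⧸ m)
  obtain ⟨f, hf⟩ := Module.projective_lifting_property σ.coverMap (e.symm.toLinearMap ∘ₗ m.mkQ)
    σ.isEssentialEpi_coverMap.surjective
  refine ⟨σ, f, σ.isEssentialEpi_coverMap.surjective_of_comp ?_⟩
  rw [hf]
  exact e.symm.surjective.comp m.mkQ_surjective

end SimpleClasses

namespace G0

theorem cls_mem_span_simple {M : Type} [AddCommGroup M] [Module R M] (hM : IsFiniteLength R M) :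
    ∀ [Module.Finite R M],
      cls R M ∈ Submodule.span ℤ (Set.range fun σ : SimpleClasses R ↦ cls R σ.rep.carrier) := by
  induction hM with
  | of_subsingleton =>
    intro _
    rw [cls_of_subsingleton]
    exact zero_mem _
  | @of_simple_quotient M _ _ N _ hN ih =>
    intro _
    have := (isFiniteLength_iff_isNoetherian_isArtinian.1 hN).1
    obtain ⟨σ, ⟨e⟩⟩ := SimpleClasses.exists_nonempty_rep_equiv (R := R) (M ⧸ N)
    rw [cls_eq_add_of_exact N.injective_subtype N.mkQ_surjective (LinearMap.exact_subtype_mkQ N),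
      ← cls_congr e]
    exact add_mem ih (Submodule.subset_span ⟨σ, rfl⟩)

variable [IsArtinianRing R]

theorem span_cls_simple :
    Submodule.span ℤ (Set.range fun σ : SimpleClasses R ↦ cls R σ.rep.carrier) = ⊤ :=
  eq_top_of_forall_cls_mem fun _ ↦ cls_mem_span_simple <|
    isFiniteLength_iff_isNoetherian_isArtinian.2 ⟨inferInstance, inferInstance⟩

theorem linearIndependent_cls_simple :
    LinearIndependent ℤ fun σ : SimpleClasses R ↦ cls R σ.rep.carrier := by
  refine .of_pairwise_dual_eq_zero_one _
    (fun σ ↦ (homLengthHom σ.cover.carrier).toIntLinearMap) (fun σ τ h ↦ ?_) (fun σ ↦ ?_)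
  · simp [homLengthHom_cls, SimpleClasses.homLength_cover_rep_of_ne h]
  · simp [homLengthHom_cls, SimpleClasses.homLength_cover_rep_self]

variable (R) in
/-- The classes of the simple modules, as a basis of `G₀`. -/
noncomputable def simpleBasis : Module.Basis (SimpleClasses R) ℤ (G0 R) :=
  .mk linearIndependent_cls_simple span_cls_simple.ge

end G0

namespace K0

variable [IsArtinianRing R]

theorem cls_mem_span_cover (P : Type) [AddCommGroup P] [Module R P] [Module.Finite R P]
    [Module.Projective R P] :
    cls R P ∈ Submodule.span ℤ (Set.range fun σ : SimpleClasses R ↦ cls R σ.cover.carrier) := by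
  induction h : Module.length R P using WellFoundedLT.induction generalizing P with | _ n ih
  subst h
  rcases subsingleton_or_nontrivial P with _ | _
  · simp [cls_of_subsingleton]
  obtain ⟨σ, f, hf⟩ := SimpleClasses.exists_surjective_cover (R := R) P
  obtain ⟨e⟩ := nonempty_equiv_ker_prod_of_surjective hf
  have := projective_ker_of_surjective hf
  have hker : LinearMap.ker f ≠ ⊤ := fun h ↦ σ.coverMap_ne_zero <| by
    rw [← LinearMap.cancel_right hf, LinearMap.ker_eq_top.1 h, LinearMap.comp_zero,
      LinearMap.zero_comp]
  rw [cls_eq_add_of_equiv_prod e]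
  exact add_mem (ih _ (Submodule.length_lt hker) _ rfl) (Submodule.subset_span ⟨σ, rfl⟩)

theorem span_cls_cover :
    Submodule.span ℤ (Set.range fun σ : SimpleClasses R ↦ cls R σ.cover.carrier) = ⊤ :=
  eq_top_of_forall_cls_mem fun P ↦ cls_mem_span_cover P.carrier

theorem linearIndependent_cls_cover :
    LinearIndependent ℤ fun σ : SimpleClasses R ↦ cls R σ.cover.carrier := by
  refine .of_comp (topHom R).toIntLinearMap ?_
  convert G0.linearIndependent_cls_simple (R := R) with σ
  exact topHom_cls_of_isEssentialEpi σ.isEssentialEpi_coverMap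

variable (R) in
/-- The classes of the projective covers of the simple modules, as a basis of `K₀`. -/
noncomputable def coverBasis : Module.Basis (SimpleClasses R) ℤ (K0 R) :=
  .mk linearIndependent_cls_cover span_cls_cover.ge

end K0

end GrothendieckGroups

/-- **Lemma on ranks of Grothendieck groups** (Lemma 2.8 of the paper).
Let `Ω` be a left artinian ring and let `s` be the number of isomorphism classes of
simple left `Ω`-modules.  Then `K₀(Ω)` and `G₀(Ω)` are free `ℤ`-modules of rank `s`. -/
theorem rank_K0_G0_of_artinian (Ω : Type) [Ring Ω] [IsArtinianRing Ω] :
    Nonempty (G0 Ω ≃+ (SimpleClasses Ω →₀ ℤ)) ∧ Nonempty (K0 Ω ≃+ (SimpleClasses Ω →₀ ℤ)) :=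
  ⟨⟨(G0.simpleBasis Ω).repr.toAddEquiv⟩, ⟨(K0.coverBasis Ω).repr.toAddEquiv⟩⟩
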